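/- Let S be a Polish metric space and let P be an asymptotically stable regular Markov operator on S with invariant probability measure μ*, which has the e-property in L_FM(S) at a point z ∈ S. If (x_m) is a sequence in S converging to z and (n_m) is a sequence of natural numbers with n_m → ∞, then the measures P^{n_m}δ_{x_m} converge weakly to μ* as m → ∞. -/

import Mathlib

open MeasureTheory ProbabilityTheory Filter Topology

/-- The `n`-step evolution of a measure under the Markov operator generated by the
transition kernel `κ`: `P⁰μ = μ`, `Pⁿ⁺¹μ = (Pⁿμ).bind κ`. -/
noncomputable def kIter {S : Type*} [MeasurableSpace S] (κ : ProbabilityTheory.Kernel S S) :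
    ℕ → Measure S → Measure S
  | 0, μ => μ
  | n + 1, μ => (kIter κ n μ).bind (fun x => κ x)

/-- The `n`-th iterate of the dual operator: `Uⁿf(x) = ∫ f d(Pⁿδₓ)`. -/
noncomputable def kDual {S : Type*} [MeasurableSpace S] (κ : ProbabilityTheory.Kernel S S)
    (n : ℕ) (f : S → ℝ) (x : S) : ℝ :=
  ∫ y, f y ∂(kIter κ n (Measure.dirac x))

/-- A real-valued function is bounded. -/
def IsBddFun {S : Type*} (f : S → ℝ) : Prop := ∃ C : ℝ, ∀ x, |f x| ≤ C

/-- Asymptotic stability: `μst` is an invariant probability measure and `Pⁿμ → μst`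
weakly for every Borel probability measure `μ`. -/
def IsAsympStable {S : Type*} [MeasurableSpace S] [TopologicalSpace S]
    (κ : ProbabilityTheory.Kernel S S) (μst : Measure S) : Prop :=
  IsProbabilityMeasure μst ∧ kIter κ 1 μst = μst ∧
    ∀ μ : Measure S, IsProbabilityMeasure μ → ∀ f : S → ℝ, Continuous f → IsBddFun f →
      Tendsto (fun n => ∫ x, f x ∂(kIter κ n μ)) atTop (𝓝 (∫ x, f x ∂μst))

/-- The e-property in `L_FM(S)` (1-Lipschitz functions with values in `[0,1]`) at a point
`z`: for every such `f`, `sup_{n} |Uⁿf(x) − Uⁿf(z)| → 0` as `x → z`. -/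
def EPropFMAt {S : Type*} [MeasurableSpace S] [PseudoMetricSpace S]
    (κ : ProbabilityTheory.Kernel S S) (z : S) : Prop :=
  ∀ f : S → ℝ, LipschitzWith 1 f → (∀ x, f x ∈ Set.Icc (0 : ℝ) 1) →
    Tendsto (fun x => ⨆ n : ℕ, |kDual κ n f x - kDual κ n f z|) (𝓝 z) (𝓝 0)

/-!
For a `1`-Lipschitz `f : S → [0, 1]` split `Uⁿf(x) - ∫ f dμ*` into `Uⁿf(x) - Uⁿf(z)`, which tends to
`0` as `x → z` uniformly in `n` by the e-property, and `Uⁿf(z) - ∫ f dμ*`, which tends to `0` as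
`n → ∞` by stability. Hence `Uⁿf(x) → ∫ f dμ*` jointly as `n → ∞` and `x → z`. Every bounded
Lipschitz function is an affine image of such an `f`, so `Pⁿδₓ → μ*` weakly in the same joint sense.
-/

theorem IsBddFun.of_mem_Icc {X : Type*} {f : X → ℝ} {a b : ℝ} (hf : ∀ x, f x ∈ Set.Icc a b) :
    IsBddFun f :=
  ⟨max |a| |b|, fun x => abs_le_max_abs_abs (hf x).1 (hf x).2⟩

theorem exists_affine_lipschitzWith_one_mem_Icc {X : Type*} [PseudoEMetricSpace X]
    {f : X → ℝ} (hbdd : IsBddFun f) {L : NNReal} (hlip : LipschitzWith L f) :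
    ∃ (a b : ℝ) (g : X → ℝ), LipschitzWith 1 g ∧ (∀ x, g x ∈ Set.Icc (0 : ℝ) 1) ∧
      ∀ x, f x = a * g x + b := by
  obtain ⟨C, hC⟩ := hbdd
  let K : ℝ := 2 * |C| + L + 1
  have hK : 0 < K := by positivity
  refine ⟨K, -|C|, fun x => K⁻¹ * (f x + |C|), ?_, fun x => ?_, fun x => by field_simp; ring⟩
  · have hcomp := (lipschitzWith_smul K⁻¹).comp (hlip.add (LipschitzWith.const |C|))
    refine hcomp.weaken (NNReal.coe_le_coe.1 ?_)
    have hLK : (L : ℝ) ≤ K := by linarith [abs_nonneg C]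
    simpa [abs_of_pos hK, inv_mul_eq_div] using (div_le_one hK).2 hLK
  · obtain ⟨hlower, hupper⟩ := abs_le.1 ((hC x).trans (le_abs_self C))
    simp only [inv_mul_eq_div]
    exact ⟨div_nonneg (by linarith) hK.le, (div_le_one hK).2 (by linarith [L.coe_nonneg])⟩

theorem tendsto_probabilityMeasure_of_forall_lipschitzWith_one {ι X : Type*}
    [PseudoEMetricSpace X] [MeasurableSpace X] [OpensMeasurableSpace X]
    {l : Filter ι} [l.IsCountablyGenerated] {μs : ι → ProbabilityMeasure X}
    {μ : ProbabilityMeasure X}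
    (h : ∀ g : X → ℝ, LipschitzWith 1 g → (∀ x, g x ∈ Set.Icc (0 : ℝ) 1) →
      Tendsto (fun i => ∫ x, g x ∂(μs i : Measure X)) l (𝓝 (∫ x, g x ∂(μ : Measure X)))) :
    Tendsto μs l (𝓝 μ) := by
  rw [tendsto_iff_forall_lipschitz_integral_tendsto]
  rintro f hosc ⟨L, hlip⟩
  have hbdd : IsBddFun f := by
    obtain ⟨C, hC⟩ := isBounded_iff_forall_norm_le.1 (Metric.isBounded_range_iff.2 hosc)
    exact ⟨C, fun x => hC _ (Set.mem_range_self x)⟩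
  obtain ⟨a, b, g, hg_lip, hg_mem, hfg⟩ := exists_affine_lipschitzWith_one_mem_Icc hbdd hlip
  have integral_f (ν : ProbabilityMeasure X) :
      ∫ x, f x ∂(ν : Measure X) = a * ∫ x, g x ∂(ν : Measure X) + b := by
    have hg_int : Integrable g (ν : Measure X) :=
      .of_mem_Icc 0 1 hg_lip.continuous.measurable.aemeasurable (ae_of_all _ hg_mem)
    simp only [hfg]
    rw [integral_add (hg_int.const_mul a) (integrable_const b), integral_const_mul,
      integral_const, probReal_univ, one_smul]
  simp only [integral_f]
  exact ((h g hg_lip hg_mem).const_mul a).add_const b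

section MarkovIterates

variable {S : Type*} [MeasurableSpace S] (κ : Kernel S S) [IsMarkovKernel κ]

instance isProbabilityMeasure_kIter (n : ℕ) (μ : Measure S) [IsProbabilityMeasure μ] :
    IsProbabilityMeasure (kIter κ n μ) := by
  induction n with
  | zero => assumption
  | succ n ih =>
    exact isProbabilityMeasure_bind κ.measurable.aemeasurable (ae_of_all _ fun _ => inferInstance)

theorem abs_kDual_le {f : S → ℝ} {C : ℝ} (hC : ∀ y, |f y| ≤ C) (n : ℕ) (x : S) :
    |kDual κ n f x| ≤ C := by
  have hnorm : ∀ᵐ y ∂kIter κ n (Measure.dirac x), ‖f y‖ ≤ C := ae_of_all _ hC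
  simpa [kDual] using norm_integral_le_of_norm_le_const hnorm

theorem abs_kDual_sub_le_iSup {f : S → ℝ} (hf : IsBddFun f) (n : ℕ) (x z : S) :
    |kDual κ n f x - kDual κ n f z| ≤ ⨆ k, |kDual κ k f x - kDual κ k f z| := by
  obtain ⟨C, hC⟩ := hf
  refine le_ciSup (f := fun k => |kDual κ k f x - kDual κ k f z|) ⟨C + C, ?_⟩ n
  rintro _ ⟨k, rfl⟩
  exact (abs_sub _ _).trans (add_le_add (abs_kDual_le κ hC k x) (abs_kDual_le κ hC k z))

end MarkovIterates

theorem EPropFMAt.tendsto_kDual {S : Type*} [MeasurableSpace S] [PseudoMetricSpace S]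
    {κ : Kernel S S} [IsMarkovKernel κ] {z : S} (hEz : EPropFMAt κ z)
    {f : S → ℝ} (hlip : LipschitzWith 1 f) (hmem : ∀ x, f x ∈ Set.Icc (0 : ℝ) 1)
    {l : Filter ℕ} {a : ℝ} (hz : Tendsto (fun n => kDual κ n f z) l (𝓝 a)) :
    Tendsto (fun p : ℕ × S => kDual κ p.1 f p.2) (l ×ˢ 𝓝 z) (𝓝 a) := by
  have hdiff : Tendsto (fun p : ℕ × S => kDual κ p.1 f p.2 - kDual κ p.1 f z) (l ×ˢ 𝓝 z) (𝓝 0) :=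
    squeeze_zero_norm (fun p => abs_kDual_sub_le_iSup κ (.of_mem_Icc hmem) p.1 p.2 z)
      ((hEz f hlip hmem).comp tendsto_snd)
  simpa using hdiff.add (hz.comp tendsto_fst)

theorem kIter_dirac_tendsto_invariant_general {S : Type*} [PseudoMetricSpace S]
    [MeasurableSpace S] [OpensMeasurableSpace S] (κ : Kernel S S) [IsMarkovKernel κ]
    (μ : Measure S) [IsProbabilityMeasure μ] (z : S)
    (hz : ∀ f : S → ℝ, Continuous f → IsBddFun f →
      Tendsto (fun n => ∫ y, f y ∂(kIter κ n (Measure.dirac z))) atTop (𝓝 (∫ y, f y ∂μ)))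
    (hEz : EPropFMAt κ z) :
    ∀ f : S → ℝ, Continuous f → IsBddFun f →
      Tendsto (fun p : ℕ × S => ∫ y, f y ∂(kIter κ p.1 (Measure.dirac p.2))) (atTop ×ˢ 𝓝 z)
        (𝓝 (∫ y, f y ∂μ)) := by
  let μs : ℕ × S → ProbabilityMeasure S := fun p => ⟨kIter κ p.1 (Measure.dirac p.2), inferInstance⟩
  have hweak : Tendsto μs (atTop ×ˢ 𝓝 z) (𝓝 ⟨μ, inferInstance⟩) := by
    refine tendsto_probabilityMeasure_of_forall_lipschitzWith_one fun g hlip hmem => ?_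
    exact hEz.tendsto_kDual hlip hmem (hz g hlip.continuous (.of_mem_Icc hmem))
  rintro f hf ⟨C, hC⟩
  exact ProbabilityMeasure.tendsto_iff_forall_integral_tendsto.1 hweak
    (BoundedContinuousFunction.ofNormedAddCommGroup f hf C hC)

/-- For an asymptotically stable regular Markov operator with the e-property in `L_FM(S)` at
`z`: if `xₘ → z` and `nₘ → ∞`, then `P^{nₘ}δ_{xₘ}` converges weakly to the invariant
measure. -/
theorem kIter_dirac_tendsto_invariant
    {S : Type*} [MetricSpace S] [CompleteSpace S] [SecondCountableTopology S]
    [MeasurableSpace S] [BorelSpace S]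
    (κ : ProbabilityTheory.Kernel S S) [IsMarkovKernel κ]
    (μst : Measure S) (hstab : IsAsympStable κ μst)
    (z : S) (hEz : EPropFMAt κ z)
    (x : ℕ → S) (hx : Tendsto x atTop (𝓝 z))
    (n : ℕ → ℕ) (hn : Tendsto n atTop atTop) :
    ∀ f : S → ℝ, Continuous f → IsBddFun f →
      Tendsto (fun m => ∫ y, f y ∂(kIter κ (n m) (Measure.dirac (x m)))) atTop
        (𝓝 (∫ y, f y ∂μst)) := by
  have : IsProbabilityMeasure μst := hstab.1
  exact fun f hf hfb => (kIter_dirac_tendsto_invariant_general κ μst z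
    (hstab.2.2 (Measure.dirac z) inferInstance) hEz f hf hfb).comp (hn.prodMk hx)
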